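/- Let W and V be real inner product spaces, D : W →ₗ[ℝ] V a linear map, ρ > 0, k > 0, Δt > 0 real constants, c = k⁻¹ and ν = ρ⁻¹. Let v : ℕ → V and σ : ℕ → W satisfy the implicit midpoint dual mixed scheme: for all n ∈ ℕ and all ψ ∈ V, ρ⟪ψ, v(n+1) − v(n)⟫ = Δt⟪ψ, D((1/2) • (σ(n) + σ(n+1)))⟫, and for all n ∈ ℕ and all ξ ∈ W, c⟪ξ, σ(n+1) − σ(n)⟫ = −Δt⟪D ξ, (1/2) • (v(n) + v(n+1))⟫. Then for all n ≥ 1 and all ξ ∈ W, c⟪ξ, σ(n+1) − 2•σ(n) + σ(n−1)⟫ = −Δt²·ν⟪D ξ, D((1/4) • (σ(n+1) + 2•σ(n) + σ(n−1)))⟫. -/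

import Mathlib

open scoped RealInnerProductSpace

/-! The second difference of the stress is the difference of two consecutive stress increments, so
the stress equation expresses it through the difference of two consecutive velocity midpoints.
Differences and midpoints commute: this is the midpoint of two consecutive velocity increments, and
the velocity equation turns these into divergences of stress midpoints. The midpoint of two
consecutive stress midpoints is `σ̂`. -/

section Midpoint

variable {R M N : Type*} [Ring R] [Invertible (2 : R)]
  [AddCommGroup M] [Module R M] [AddCommGroup N] [Module R N]

theorem linearMap_map_midpoint (f : M →ₗ[R] N) (x y : M) :
    f (midpoint R x y) = midpoint R (f x) (f y) :=
  f.toAffineMap.map_midpoint x y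

variable (R) in
/-- The three-point average `(x + 2 y + z) / 4`, which is the `σ̂ⁿ` of the second-order recursion
when `x, y, z` are the stresses at times `n - 1, n, n + 1`. It is encoded as an iterated midpoint
because it arises as the average of two consecutive midpoint values. -/
def weightedAverage (x y z : M) : M :=
  midpoint R (midpoint R x y) (midpoint R y z)

end Midpoint

section DivisionRing

variable {K M : Type*} [DivisionRing K] [Invertible (2 : K)] [AddCommGroup M] [Module K M]

theorem midpoint_eq_half_smul_add (x y : M) : midpoint K x y = (1 / 2 : K) • (x + y) := by
  rw [midpoint_eq_smul_add, invOf_eq_inv, one_div]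

theorem weightedAverage_eq_quarter_smul (x y z : M) :
    weightedAverage K x y z = (1 / 4 : K) • (z + (2 : K) • y + x) := by
  have quarter : (1 / 2 : K) * (1 / 2) = 1 / 4 := by
    rw [one_div_mul_one_div_rev]
    norm_num
  calc weightedAverage K x y z
      = (1 / 2 : K) • ((1 / 2 : K) • (x + y) + (1 / 2 : K) • (y + z)) := by
        simp only [weightedAverage, midpoint_eq_half_smul_add]
    _ = (1 / 4 : K) • (x + y + (y + z)) := by rw [← smul_add, smul_smul, quarter]
    _ = (1 / 4 : K) • (z + (2 : K) • y + x) := by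
        rw [two_smul]
        congr 1
        abel

end DivisionRing

section MidpointScheme

variable {R W V : Type*} [CommRing R] [Invertible (2 : R)]
  [AddCommGroup W] [Module R W] [AddCommGroup V] [Module R V] {τ : R →+* R}

/-- The implicit midpoint dual mixed scheme for velocities `v` and stresses `σ`. The compliance is
part of the form `a` (for a scalar compliance `c`, `a` is `c` times the inner product), so that it
may be an arbitrary tensor; the forms are semilinear in the test function, so that complex inner
products are included. -/
structure IsMidpointSolution (a : W →ₛₗ[τ] W →ₗ[R] R) (b : V →ₛₗ[τ] V →ₗ[R] R)
    (D : W →ₗ[R] V) (ρ Δt : R) (v : ℕ → V) (σ : ℕ → W) : Prop where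
  velocity_eq (n : ℕ) (ψ : V) :
    ρ * b ψ (v (n + 1) - v n) = Δt * b ψ (D (midpoint R (σ n) (σ (n + 1))))
  stress_eq (n : ℕ) (ξ : W) :
    a ξ (σ (n + 1) - σ n) = -(Δt * b (D ξ) (midpoint R (v n) (v (n + 1))))

namespace IsMidpointSolution

variable {a : W →ₛₗ[τ] W →ₗ[R] R} {b : V →ₛₗ[τ] V →ₗ[R] R} {D : W →ₗ[R] V}
  {ρ Δt ν : R} {v : ℕ → V} {σ : ℕ → W}

theorem velocity_increment (h : IsMidpointSolution a b D ρ Δt v σ) (hν : ν * ρ = 1)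
    (n : ℕ) (ψ : V) :
    b ψ (v (n + 1) - v n) = Δt * ν * b ψ (D (midpoint R (σ n) (σ (n + 1)))) := by
  linear_combination ν * h.velocity_eq n ψ - b ψ (v (n + 1) - v n) * hν

theorem velocity_midpoint_increment (h : IsMidpointSolution a b D ρ Δt v σ) (hν : ν * ρ = 1)
    (n : ℕ) (ψ : V) :
    b ψ (midpoint R (v (n + 1)) (v (n + 2)) - midpoint R (v n) (v (n + 1))) =
      Δt * ν * b ψ (D (weightedAverage R (σ n) (σ (n + 1)) (σ (n + 2)))) := by
  calc b ψ (midpoint R (v (n + 1)) (v (n + 2)) - midpoint R (v n) (v (n + 1)))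
      = b ψ (midpoint R (v (n + 1) - v n) (v (n + 2) - v (n + 1))) :=
        congrArg (b ψ) (midpoint_vsub_midpoint (v (n + 1)) (v (n + 2)) (v n) (v (n + 1)))
    _ = midpoint R (Δt * ν * b ψ (D (midpoint R (σ n) (σ (n + 1)))))
          (Δt * ν * b ψ (D (midpoint R (σ (n + 1)) (σ (n + 2))))) := by
        rw [linearMap_map_midpoint, h.velocity_increment hν n, h.velocity_increment hν (n + 1)]
    _ = Δt * ν * b ψ (D (weightedAverage R (σ n) (σ (n + 1)) (σ (n + 2)))) :=
        (linearMap_map_midpoint ((Δt * ν) • b ψ ∘ₗ D) _ _).symm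

end IsMidpointSolution

theorem stmt9_general {a : W →ₛₗ[τ] W →ₗ[R] R} {b : V →ₛₗ[τ] V →ₗ[R] R} {D : W →ₗ[R] V}
    {ρ Δt ν : R} {v : ℕ → V} {σ : ℕ → W} (h : IsMidpointSolution a b D ρ Δt v σ)
    (hν : ν * ρ = 1) (n : ℕ) (ξ : W) :
    a ξ (σ (n + 2) - (2 : R) • σ (n + 1) + σ n) =
      -(Δt ^ 2 * ν * b (D ξ) (D (weightedAverage R (σ n) (σ (n + 1)) (σ (n + 2))))) := by
  have second_difference : σ (n + 2) - (2 : R) • σ (n + 1) + σ n =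
      (σ (n + 2) - σ (n + 1)) - (σ (n + 1) - σ n) := by module
  have midpoint_increment := h.velocity_midpoint_increment hν n (D ξ)
  rw [map_sub] at midpoint_increment
  rw [second_difference, map_sub, h.stress_eq (n + 1), h.stress_eq n]
  linear_combination -Δt * midpoint_increment

end MidpointScheme

theorem IsMidpointSolution.of_inner {𝕜 W V : Type*} [RCLike 𝕜] [Invertible (2 : 𝕜)]
    [NormedAddCommGroup W] [InnerProductSpace 𝕜 W] [NormedAddCommGroup V] [InnerProductSpace 𝕜 V]
    {D : W →ₗ[𝕜] V} {ρ c Δt : 𝕜} {v : ℕ → V} {σ : ℕ → W}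
    (velocity_eq : ∀ n ψ, ρ * inner 𝕜 ψ (v (n + 1) - v n) =
      Δt * inner 𝕜 ψ (D ((1 / 2 : 𝕜) • (σ n + σ (n + 1)))))
    (stress_eq : ∀ n ξ, c * inner 𝕜 ξ (σ (n + 1) - σ n) =
      -(Δt * inner 𝕜 (D ξ) ((1 / 2 : 𝕜) • (v n + v (n + 1))))) :
    IsMidpointSolution (c • innerₛₗ 𝕜) (innerₛₗ 𝕜) D ρ Δt v σ where
  velocity_eq n ψ := by
    rw [midpoint_eq_half_smul_add]
    exact velocity_eq n ψ
  stress_eq n ξ := by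
    rw [midpoint_eq_half_smul_add]
    exact stress_eq n ξ

theorem stmt9 {W V : Type*} [NormedAddCommGroup W] [InnerProductSpace ℝ W]
    [NormedAddCommGroup V] [InnerProductSpace ℝ V]
    (D : W →ₗ[ℝ] V) (ρ k Δt c ν : ℝ) (hρ : 0 < ρ) (hk : 0 < k) (hΔt : 0 < Δt)
    (hc : c = k⁻¹) (hν : ν = ρ⁻¹)
    (v : ℕ → V) (σ : ℕ → W)
    (hdyn : ∀ n : ℕ, ∀ ψ : V, ρ * ⟪ψ, v (n + 1) - v n⟫ =
      Δt * ⟪ψ, D ((1 / 2 : ℝ) • (σ n + σ (n + 1)))⟫)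
    (hσupd : ∀ n : ℕ, ∀ ξ : W, c * ⟪ξ, σ (n + 1) - σ n⟫ =
      -(Δt * ⟪D ξ, (1 / 2 : ℝ) • (v n + v (n + 1))⟫)) :
    ∀ n : ℕ, 1 ≤ n → ∀ ξ : W,
      c * ⟪ξ, σ (n + 1) - (2 : ℝ) • σ n + σ (n - 1)⟫ =
        -(Δt ^ 2 * ν *
          ⟪D ξ, D ((1 / 4 : ℝ) • (σ (n + 1) + (2 : ℝ) • σ n + σ (n - 1)))⟫) := by
  intro n hn ξ
  obtain ⟨m, rfl⟩ := Nat.exists_eq_add_of_le' hn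
  have hνρ : ν * ρ = 1 := hν ▸ inv_mul_cancel₀ hρ.ne'
  rw [← weightedAverage_eq_quarter_smul]
  exact stmt9_general (.of_inner hdyn hσupd) hνρ m ξ
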